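/- arXiv:2307.16128 — 2 statements merged into one kernel-verified Lean document; each statement's English description precedes it below -/
import Mathlib

section
/- (Newton step contraction) Let S ⊆ ℝⁿ be a convex set, let D be a map from S to real symmetric positive definite n×n matrices satisfying the self-concordance inequality on S, and let r : ℝⁿ → ℝⁿ be differentiable on S with Fréchet derivative D(z) at each z ∈ S. Let y ∈ S, set n(y) := −D(y)⁻¹ r(y), y⁺ := y + n(y), n(y⁺) := −D(y⁺)⁻¹ r(y⁺), and δ := ‖n(y)‖_{D(y)}. If δ < 1 and the segment [y, y⁺] is contained in S, then ‖n(y⁺)‖_{D(y⁺)} ≤ δ² / (1 − δ)². -/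
open Matrix

/-- The Hessian norm `‖z‖_H = √(zᵀ H z)` associated with a matrix `H`. -/
noncomputable def hnorm {ι : Type*} [Fintype ι] (H : Matrix ι ι ℝ) (z : ι → ℝ) : ℝ :=
  Real.sqrt (z ⬝ᵥ H.mulVec z)

/-- A matrix-valued map `D` satisfies the self-concordance inequality on `S`. -/
def SelfConcordantOn {n : ℕ} (S : Set (Fin n → ℝ))
    (D : (Fin n → ℝ) → Matrix (Fin n) (Fin n) ℝ) : Prop :=
  ∀ y₁ ∈ S, ∀ y₂ ∈ S, hnorm (D y₁) (y₂ - y₁) < 1 →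
    ∀ v : Fin n → ℝ, hnorm (D y₂) v ≤ hnorm (D y₁) v / (1 - hnorm (D y₁) (y₂ - y₁))

lemma hn_nonneg {ι : Type*} [Fintype ι] (H : Matrix ι ι ℝ) (z : ι → ℝ) : 0 ≤ hnorm H z :=
  Real.sqrt_nonneg _

lemma hn_quad_nonneg {n : ℕ} {H : Matrix (Fin n) (Fin n) ℝ} (hH : H.PosDef) (z : Fin n → ℝ) :
    0 ≤ z ⬝ᵥ H.mulVec z := by
  have := hH.posSemidef.dotProduct_mulVec_nonneg z
  simpa using this

lemma hn_sq {n : ℕ} {H : Matrix (Fin n) (Fin n) ℝ} (hH : H.PosDef) (z : Fin n → ℝ) :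
    hnorm H z ^ 2 = z ⬝ᵥ H.mulVec z :=
  Real.sq_sqrt (hn_quad_nonneg hH z)

lemma hn_smul {n : ℕ} (H : Matrix (Fin n) (Fin n) ℝ) (c : ℝ) (z : Fin n → ℝ) :
    hnorm H (c • z) = |c| * hnorm H z := by
  unfold hnorm
  have : (c • z) ⬝ᵥ H.mulVec (c • z) = c ^ 2 * (z ⬝ᵥ H.mulVec z) := by
    simp [Matrix.mulVec_smul]; ring
  rw [this, Real.sqrt_mul (sq_nonneg c), Real.sqrt_sq_eq_abs]

lemma symm_swap {n : ℕ} {A : Matrix (Fin n) (Fin n) ℝ} (hA : Aᵀ = A) (v w : Fin n → ℝ) :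
    v ⬝ᵥ A.mulVec w = w ⬝ᵥ A.mulVec v := by
  rw [Matrix.dotProduct_mulVec, ← Matrix.mulVec_transpose, hA, dotProduct_comm]

lemma bilin_bound {n : ℕ} {A H : Matrix (Fin n) (Fin n) ℝ} (hA : Aᵀ = A) (hH : H.PosDef)
    {c : ℝ} (hc : 0 ≤ c)
    (h1 : ∀ v, v ⬝ᵥ A.mulVec v ≤ c * (v ⬝ᵥ H.mulVec v))
    (h2 : ∀ v, -(c * (v ⬝ᵥ H.mulVec v)) ≤ v ⬝ᵥ A.mulVec v) (w p : Fin n → ℝ) :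
    w ⬝ᵥ A.mulVec p ≤ c * (hnorm H w * hnorm H p) := by
  have key : ∀ s : ℝ, 0 ≤ (c * (w ⬝ᵥ H.mulVec w)) * (s * s) + (-2 * (w ⬝ᵥ A.mulVec p)) * s
      + c * (p ⬝ᵥ H.mulVec p) := by
    intro s
    have a := h1 (s • w + p)
    have b := h2 (s • w - p)
    have e := symm_swap hA p w
    simp only [Matrix.mulVec_add, Matrix.mulVec_sub, Matrix.mulVec_smul, dotProduct_add,
      dotProduct_sub, add_dotProduct, sub_dotProduct, smul_dotProduct, dotProduct_smul,
      smul_eq_mul, e] at a b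
    nlinarith
  have d := discrim_le_zero key
  unfold discrim at d
  rw [← hn_sq hH, ← hn_sq hH] at d
  refine le_of_abs_le (abs_le_of_sq_le_sq ?_ (mul_nonneg hc (mul_nonneg (hn_nonneg _ _) (hn_nonneg _ _))))
  nlinarith

lemma lower_bound {n : ℕ} (S : Set (Fin n → ℝ))
    (D : (Fin n → ℝ) → Matrix (Fin n) (Fin n) ℝ)
    (hSC : SelfConcordantOn S D) (y p : Fin n → ℝ)
    (hδ : hnorm (D y) p < 1)
    (hseg : ∀ t : ℝ, 0 ≤ t → t ≤ 1 → y + t • p ∈ S) (v : Fin n → ℝ) :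
    (1 - hnorm (D y) p) * hnorm (D y) v ≤ hnorm (D (y + p)) v := by
  set δ := hnorm (D y) p with hd
  have hδ0 : 0 ≤ δ := hn_nonneg _ _
  have hy : y ∈ S := by simpa using hseg 0 le_rfl zero_le_one
  have hphi : ∀ t : ℝ, 0 ≤ t → t ≤ 1 → hnorm (D (y + t • p)) p ≤ δ / (1 - t * δ) := by
    intro t h0 h1
    have hh : hnorm (D y) (y + t • p - y) = t * δ := by
      rw [add_sub_cancel_left, hn_smul, abs_of_nonneg h0]
    have := hSC y hy (y + t • p) (hseg t h0 h1) (by rw [hh]; nlinarith) p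
    rwa [hh] at this
  have main : ∀ N : ℕ, 0 < N → δ / N < 1 - δ →
      hnorm (D y) v * (1 - δ - δ / N) ≤ hnorm (D (y + p)) v * (1 - δ / N) := by
    intro N hN hsmall
    have hN' : (0 : ℝ) < N := by exact_mod_cast hN
    set h := δ / N with hh
    have hh0 : 0 ≤ h := by positivity
    have hNh : N * h = δ := by rw [hh]; field_simp
    have ind : ∀ k : ℕ, k ≤ N → hnorm (D y) v * (1 - (k + 1) * h) ≤
        hnorm (D (y + ((k : ℝ) / N) • p)) v * (1 - h) := by
      intro k
      induction k with
      | zero => intro _; simp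
      | succ k ih =>
        intro hk
        have ihk := ih (by omega)
        have hkN : ((k : ℝ) + 1) ≤ N := by exact_mod_cast hk
        push_cast
        have hk0 : (0 : ℝ) ≤ k := by positivity
        have m1 := hseg (k / N) (by positivity) (by rw [div_le_one hN']; linarith)
        have b0 : (0 : ℝ) ≤ (k + 1) / N := by positivity
        have b1 : ((k : ℝ) + 1) / N ≤ 1 := by rw [div_le_one hN']; linarith
        have m2 := hseg ((k + 1) / N) b0 b1
        have hp := hphi ((k + 1) / N) b0 b1
        set a := hnorm (D (y + (((k : ℝ) + 1) / N) • p)) v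
        set b := hnorm (D (y + ((k : ℝ) / N) • p)) v
        have ha : 0 ≤ a := hn_nonneg _ _
        have e1 : ((k : ℝ) + 1) / N * δ = (k + 1) * h := by rw [hh]; ring
        rw [e1] at hp
        have hkh : ((k : ℝ) + 1) * h ≤ δ := by nlinarith
        have pos1 : 0 < 1 - ((k : ℝ) + 1) * h := by linarith
        have pos2 : 0 < 1 - ((k : ℝ) + 1 + 1) * h := by nlinarith
        have e2 : hnorm (D (y + (((k : ℝ) + 1) / N) • p))
            (y + ((k : ℝ) / N) • p - (y + (((k : ℝ) + 1) / N) • p))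
            = (1 / N) * hnorm (D (y + (((k : ℝ) + 1) / N) • p)) p := by
          rw [show y + ((k : ℝ) / N) • p - (y + (((k : ℝ) + 1) / N) • p)
            = (-(1 / N : ℝ)) • p by
              rw [add_sub_add_left_eq_sub, ← sub_smul]; congr 1; ring]
          rw [hn_smul, abs_neg, abs_of_nonneg (by positivity)]
        have e3 : (1 / N : ℝ) * hnorm (D (y + (((k : ℝ) + 1) / N) • p)) p
            ≤ h / (1 - (k + 1) * h) := by
          calc _ ≤ (1 / N : ℝ) * (δ / (1 - (k + 1) * h)) := by gcongr
            _ = _ := by rw [hh]; ring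
        have e4 : 1 - h / (1 - (k + 1) * h)
            = (1 - ((k : ℝ) + 1 + 1) * h) / (1 - (k + 1) * h) := by
          rw [eq_div_iff pos1.ne', sub_mul, div_mul_cancel₀ _ pos1.ne']; ring
        have e5 : 0 < (1 - ((k : ℝ) + 1 + 1) * h) / (1 - (k + 1) * h) := div_pos pos2 pos1
        have sc := hSC _ m2 _ m1 (by rw [e2]; linarith) v
        rw [e2] at sc
        have sc2 : b ≤ a / ((1 - ((k : ℝ) + 1 + 1) * h) / (1 - (k + 1) * h)) := by
          refine sc.trans ?_
          apply div_le_div_of_nonneg_left ha e5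
          linarith
        rw [le_div_iff₀ e5, ← mul_div_assoc, div_le_iff₀ pos1] at sc2
        have h1 : 0 ≤ 1 - h := by linarith
        have f1 := mul_le_mul_of_nonneg_right ihk pos2.le
        have f2 := mul_le_mul_of_nonneg_right sc2 h1
        refine le_of_mul_le_mul_right ?_ pos1
        nlinarith
    have := ind N le_rfl
    rw [div_self hN'.ne', one_smul] at this
    convert this using 2
    linarith
  have lim : Filter.Tendsto (fun N : ℕ => δ / (N : ℝ)) Filter.atTop (nhds 0) :=
    tendsto_const_div_atTop_nhds_zero_nat δ
  have l1 : Filter.Tendsto (fun N : ℕ => hnorm (D y) v * (1 - δ - δ / N)) Filter.atTop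
      (nhds (hnorm (D y) v * (1 - δ - 0))) := (lim.const_sub _).const_mul _
  have l2 : Filter.Tendsto (fun N : ℕ => hnorm (D (y + p)) v * (1 - δ / N)) Filter.atTop
      (nhds (hnorm (D (y + p)) v * (1 - 0))) := (lim.const_sub _).const_mul _
  have := le_of_tendsto_of_tendsto l1 l2 (by
    filter_upwards [Filter.eventually_gt_atTop 0,
      lim.eventually (gt_mem_nhds (show (0 : ℝ) < 1 - δ by linarith))] with N h1 h2
    exact main N h1 h2)
  linarith

lemma core {n : ℕ} (S : Set (Fin n → ℝ))
    (D : (Fin n → ℝ) → Matrix (Fin n) (Fin n) ℝ)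
    (hPD : ∀ y ∈ S, (D y).PosDef)
    (hSC : SelfConcordantOn S D)
    (r : (Fin n → ℝ) → (Fin n → ℝ))
    (hr : ∀ z ∈ S,
      HasFDerivWithinAt r ((D z).mulVecLin.toContinuousLinearMap) S z)
    (y p : Fin n → ℝ) (hy : y ∈ S)
    (hδ : hnorm (D y) p < 1)
    (hseg : ∀ t : ℝ, 0 ≤ t → t ≤ 1 → y + t • p ∈ S)
    (hp : r y = - (D y).mulVec p) (w : Fin n → ℝ) :
    w ⬝ᵥ r (y + p) ≤ hnorm (D y) p ^ 2 / (1 - hnorm (D y) p) * hnorm (D y) w := by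
  set δ := hnorm (D y) p with hd
  have hδ0 : 0 ≤ δ := hn_nonneg _ _
  have symm : ∀ z ∈ S, (D z)ᵀ = D z := by
    intro z hz
    have := (hPD z hz).isHermitian
    simpa [Matrix.IsHermitian, Matrix.conjTranspose_eq_transpose_of_trivial] using this
  have bnd : ∀ t : ℝ, 0 ≤ t → t ≤ 1 → w ⬝ᵥ (D (y + t • p) - D y).mulVec p ≤
      (1 / (1 - t * δ) ^ 2 - 1) * (hnorm (D y) w * δ) := by
    intro t h0 h1
    have htd : t * δ < 1 := by nlinarith
    have htd0 : 0 ≤ t * δ := by positivity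
    have hS' := hseg t h0 h1
    have hh : hnorm (D y) (t • p) = t * δ := by rw [hn_smul, abs_of_nonneg h0]
    set u := 1 - t * δ with hu
    have u0 : 0 < u := by linarith
    have u1 : u ≤ 1 := by linarith
    have inv1 : 1 ≤ 1 / u ^ 2 := by
      rw [le_div_iff₀ (by positivity)]; nlinarith
    apply bilin_bound _ (hPD y hy) (by linarith)
    · intro v
      have a := hSC y hy _ hS' (by rw [add_sub_cancel_left, hh]; exact htd) v
      rw [add_sub_cancel_left, hh] at a
      have a2 := pow_le_pow_left₀ (hn_nonneg _ _) a 2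
      rw [div_pow, hn_sq (hPD _ hS'), hn_sq (hPD y hy)] at a2
      rw [Matrix.sub_mulVec, dotProduct_sub]
      have : (1 / u ^ 2 - 1) * (v ⬝ᵥ (D y).mulVec v) =
        (v ⬝ᵥ (D y).mulVec v) / u ^ 2 - v ⬝ᵥ (D y).mulVec v := by ring
      rw [this]; linarith
    · intro v
      have a := lower_bound S D hSC y (t • p) (by rw [hh]; exact htd) (by
        intro s s0 s1
        rw [smul_smul]
        exact hseg _ (by positivity) (by nlinarith)) v
      rw [hh] at a
      have a2 := pow_le_pow_left₀ (mul_nonneg u0.le (hn_nonneg _ _)) a 2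
      rw [mul_pow, hn_sq (hPD _ hS'), hn_sq (hPD y hy)] at a2
      rw [Matrix.sub_mulVec, dotProduct_sub]
      have q := hn_quad_nonneg (hPD y hy) v
      have : 2 ≤ u ^ 2 + 1 / u ^ 2 := by
        have : u ^ 2 + 1 / u ^ 2 - 2 = (u - 1 / u) ^ 2 := by field_simp; ring
        nlinarith [sq_nonneg (u - 1 / u)]
      nlinarith
    · rw [Matrix.transpose_sub, symm _ hS', symm _ hy]
  set C := hnorm (D y) w * δ with hC
  have hder : ∀ t ∈ Set.Icc (0 : ℝ) 1, HasDerivWithinAt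
      (fun t : ℝ => w ⬝ᵥ r (y + t • p) - t * (w ⬝ᵥ (D y).mulVec p)
        - C * (t / (1 - t * δ) - t))
      (w ⬝ᵥ (D (y + t • p)).mulVec p - 1 * (w ⬝ᵥ (D y).mulVec p)
        - C * ((1 * (1 - t * δ) - t * (-(1 * δ))) / (1 - t * δ) ^ 2 - 1)) (Set.Icc 0 1) t := by
    intro t ht
    have htd : t * δ < 1 := by nlinarith [ht.1, ht.2]
    have l : HasDerivWithinAt (fun t : ℝ => y + t • p) ((1 : ℝ) • p) (Set.Icc 0 1) t :=
      ((hasDerivWithinAt_id t _).smul_const p).const_add y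
    have c := (hr _ (hseg t ht.1 ht.2)).comp_hasDerivWithinAt t l
      (fun s hs => hseg s hs.1 hs.2)
    have c2 : HasDerivWithinAt (fun t : ℝ => w ⬝ᵥ r (y + t • p))
        (w ⬝ᵥ (D (y + t • p)).mulVec p) (Set.Icc 0 1) t := by
      rw [hasDerivWithinAt_pi] at c
      have := HasDerivWithinAt.fun_sum (u := Finset.univ)
        (fun i _ => (c i).const_mul (w i))
      simpa [dotProduct] using this
    have i := hasDerivWithinAt_id t (Set.Icc (0 : ℝ) 1)
    exact (c2.sub (i.mul_const _)).sub
      (((i.div ((i.mul_const δ).const_sub 1) (by simp only [id]; linarith)).sub i).const_mul C)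
  have anti := antitoneOn_of_hasDerivWithinAt_nonpos (convex_Icc (0 : ℝ) 1)
    (fun t ht => (hder t ht).continuousWithinAt)
    (fun t ht => (hder t (interior_subset ht)).mono interior_subset)
    (by
      intro t ht
      have ht := interior_subset ht
      have := bnd t ht.1 ht.2
      rw [Matrix.sub_mulVec, dotProduct_sub] at this
      have e : (1 * (1 - t * δ) - t * (-(1 * δ))) = 1 := by ring
      rw [e]; linarith)
  have fin := anti (Set.left_mem_Icc.2 zero_le_one) (Set.right_mem_Icc.2 zero_le_one) zero_le_one
  simp only [one_smul, zero_smul, add_zero, hp, dotProduct_neg] at fin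
  have e : δ ^ 2 / (1 - δ) * hnorm (D y) w = C * (1 / (1 - 1 * δ) - 1) := by
    have : 1 - δ ≠ 0 := by linarith
    rw [hC, one_mul]; field_simp; ring
  rw [e]
  simp only [zero_div, sub_zero, mul_zero, zero_mul] at fin
  linarith

/-- Newton step contraction. -/
theorem stmt_3 {n : ℕ} (S : Set (Fin n → ℝ)) (hS : Convex ℝ S)
    (D : (Fin n → ℝ) → Matrix (Fin n) (Fin n) ℝ)
    (hPD : ∀ y ∈ S, (D y).PosDef)
    (hSC : SelfConcordantOn S D)
    (r : (Fin n → ℝ) → (Fin n → ℝ))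
    (hr : ∀ z ∈ S,
      HasFDerivWithinAt r ((D z).mulVecLin.toContinuousLinearMap) S z)
    (y : Fin n → ℝ) (hy : y ∈ S)
    -- `n(y) := −D(y)⁻¹ r(y)`, `y⁺ := y + n(y)`, `δ := ‖n(y)‖_{D(y)}`
    (hδ : hnorm (D y) (-(D y)⁻¹.mulVec (r y)) < 1)
    (hseg : segment ℝ y (y + -(D y)⁻¹.mulVec (r y)) ⊆ S) :
    hnorm (D (y + -(D y)⁻¹.mulVec (r y)))
        (-(D (y + -(D y)⁻¹.mulVec (r y)))⁻¹.mulVec (r (y + -(D y)⁻¹.mulVec (r y)))) ≤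
      (hnorm (D y) (-(D y)⁻¹.mulVec (r y))) ^ 2 /
        (1 - hnorm (D y) (-(D y)⁻¹.mulVec (r y))) ^ 2 := by
  have hH := hPD y hy
  set p := -(D y)⁻¹.mulVec (r y) with hpdef
  have hseg' : ∀ t : ℝ, 0 ≤ t → t ≤ 1 → y + t • p ∈ S := by
    intro t h0 h1
    apply hseg
    rw [segment_eq_image']
    exact ⟨t, ⟨h0, h1⟩, by simp⟩
  have hp : r y = - (D y).mulVec p := by
    rw [hpdef, Matrix.mulVec_neg, Matrix.mulVec_mulVec,
      Matrix.mul_nonsing_inv _ ((Matrix.isUnit_iff_isUnit_det _).1 hH.isUnit)]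
    simp
  have hS1 : y + p ∈ S := by simpa using hseg' 1 zero_le_one le_rfl
  have hH1 := hPD _ hS1
  set q := -(D (y + p))⁻¹.mulVec (r (y + p)) with hq
  have hrq : r (y + p) = - (D (y + p)).mulVec q := by
    rw [hq, Matrix.mulVec_neg, Matrix.mulVec_mulVec,
      Matrix.mul_nonsing_inv _ ((Matrix.isUnit_iff_isUnit_det _).1 hH1.isUnit)]
    simp
  have c := core S D hPD hSC r hr y p hy hδ hseg' hp (-q)
  have lb := lower_bound S D hSC y p hδ hseg' q
  have hneg : hnorm (D y) (-q) = hnorm (D y) q := by simp [hnorm, Matrix.mulVec_neg]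
  rw [hneg, hrq, neg_dotProduct_neg, ← hn_sq hH1] at c
  set δ := hnorm (D y) p
  set a := hnorm (D (y + p)) q
  have ha : 0 ≤ a := hn_nonneg _ _
  have h1 : 0 < 1 - δ := by linarith
  have c2 : a ^ 2 ≤ δ ^ 2 / (1 - δ) ^ 2 * a := by
    refine c.trans ?_
    calc δ ^ 2 / (1 - δ) * hnorm (D y) q
        = δ ^ 2 / (1 - δ) ^ 2 * ((1 - δ) * hnorm (D y) q) := by field_simp
      _ ≤ _ := by gcongr
  rcases ha.eq_or_lt with h | h
  · rw [← h]; positivity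
  · refine le_of_mul_le_mul_right ?_ h
    linarith [sq a]
end

section
/- (Distance to the optimum from the Newton decrement) Let S ⊆ ℝⁿ be an open convex set, let D be a map from S to real symmetric positive definite n×n matrices satisfying the self-concordance inequality on S, and let r : ℝⁿ → ℝⁿ be differentiable on S with Fréchet derivative D(z) at each z ∈ S. Let y ∈ S, set n(y) := −D(y)⁻¹ r(y) and δ := ‖n(y)‖_{D(y)}, and suppose δ ≤ 1/4, the closed ball {z : ‖z − y‖_{D(y)} ≤ 1} is contained in S, and there exists y* ∈ S with r(y*) = 0. Then ‖y* − y‖_{D(y)} ≤ δ + 3δ² / (1 − δ)³. -/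
open Matrix

theorem hnorm_sq_aux {n : ℕ} {H : Matrix (Fin n) (Fin n) ℝ} (hH : H.PosDef) (v : Fin n → ℝ) :
    hnorm H v ^ 2 = v ⬝ᵥ H.mulVec v := by
  unfold hnorm
  apply Real.sq_sqrt
  simpa using hH.posSemidef.dotProduct_mulVec_nonneg v

theorem hnorm_smul_aux {n : ℕ} (H : Matrix (Fin n) (Fin n) ℝ) (v : Fin n → ℝ) (t : ℝ)
    (ht : 0 ≤ t) : hnorm H (t • v) = t * hnorm H v := by
  unfold hnorm
  have : (t • v) ⬝ᵥ H.mulVec (t • v) = t ^ 2 * (v ⬝ᵥ H.mulVec v) := by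
    simp only [mulVec_smul, smul_dotProduct, dotProduct_smul, smul_eq_mul]
    ring
  rw [this, Real.sqrt_mul (sq_nonneg t), Real.sqrt_sq ht]

theorem hnorm_neg_aux {n : ℕ} (H : Matrix (Fin n) (Fin n) ℝ) (v : Fin n → ℝ) :
    hnorm H (-v) = hnorm H v := by
  unfold hnorm
  simp [mulVec_neg]

theorem cauchy_aux {n : ℕ} {H : Matrix (Fin n) (Fin n) ℝ} (hH : H.PosDef) (u v : Fin n → ℝ) :
    u ⬝ᵥ H.mulVec v ≤ hnorm H u * hnorm H v := by
  have hsym : v ⬝ᵥ H.mulVec u = u ⬝ᵥ H.mulVec v := by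
    have hT : Hᵀ = H := by simpa using hH.isHermitian.eq
    rw [dotProduct_mulVec, ← mulVec_transpose, hT, dotProduct_comm]
  have key : ∀ t : ℝ, 0 ≤ hnorm H v ^ 2 * (t * t) + (2 * (u ⬝ᵥ H.mulVec v)) * t
      + hnorm H u ^ 2 := by
    intro t
    have h := hnorm_sq_aux hH (u + t • v)
    have h2 : (u + t • v) ⬝ᵥ H.mulVec (u + t • v) = hnorm H v ^ 2 * (t * t)
        + (2 * (u ⬝ᵥ H.mulVec v)) * t + hnorm H u ^ 2 := by
      rw [hnorm_sq_aux hH, hnorm_sq_aux hH]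
      simp only [mulVec_add, mulVec_smul, add_dotProduct, dotProduct_add, smul_dotProduct,
        dotProduct_smul, smul_eq_mul, hsym]
      ring
    rw [← h2, ← h]
    positivity
  have hd := discrim_le_zero key
  unfold discrim at hd
  have hu : 0 ≤ hnorm H u := Real.sqrt_nonneg _
  have hv : 0 ≤ hnorm H v := Real.sqrt_nonneg _
  apply abs_le_of_sq_le_sq' _ (mul_nonneg hu hv) |>.2
  nlinarith

/-- Distance to the optimum from the Newton decrement. -/
theorem stmt_5 {n : ℕ} (S : Set (Fin n → ℝ)) (hS : Convex ℝ S) (hopen : IsOpen S)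
    (D : (Fin n → ℝ) → Matrix (Fin n) (Fin n) ℝ)
    (hPD : ∀ y ∈ S, (D y).PosDef)
    (hSC : SelfConcordantOn S D)
    (r : (Fin n → ℝ) → (Fin n → ℝ))
    (hr : ∀ z ∈ S,
      HasFDerivWithinAt r ((D z).mulVecLin.toContinuousLinearMap) S z)
    (y : Fin n → ℝ) (hy : y ∈ S)
    -- `n(y) := −D(y)⁻¹ r(y)`, `δ := ‖n(y)‖_{D(y)}`
    (hδ : hnorm (D y) (-(D y)⁻¹.mulVec (r y)) ≤ 1 / 4)
    (hball : {z : Fin n → ℝ | hnorm (D y) (z - y) ≤ 1} ⊆ S)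
    (ystar : Fin n → ℝ) (hystar : ystar ∈ S) (hroot : r ystar = 0) :
    hnorm (D y) (ystar - y) ≤
      hnorm (D y) (-(D y)⁻¹.mulVec (r y)) +
        3 * (hnorm (D y) (-(D y)⁻¹.mulVec (r y))) ^ 2 /
          (1 - hnorm (D y) (-(D y)⁻¹.mulVec (r y))) ^ 3 := by
  set δ := hnorm (D y) (-(D y)⁻¹.mulVec (r y)) with hδdef
  set h := ystar - y with hh
  set R := hnorm (D y) h with hR
  have hδ0 : 0 ≤ δ := Real.sqrt_nonneg _
  have hR0 : 0 ≤ R := Real.sqrt_nonneg _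
  have hseg : ∀ t ∈ Set.Icc (0 : ℝ) 1, y + t • h ∈ S := by
    intro t ht
    exact hS.add_smul_sub_mem hy hystar ht
  have hlow : ∀ t ∈ Set.Icc (0 : ℝ) 1, R / (1 + t * R) ≤ hnorm (D (y + t • h)) h := by
    intro t ht
    have hpos : 0 < 1 + t * R := by have := mul_nonneg ht.1 hR0; linarith
    set a := hnorm (D (y + t • h)) h with ha
    have ha0 : 0 ≤ a := Real.sqrt_nonneg _
    have hd : hnorm (D (y + t • h)) (y - (y + t • h)) = t * a := by
      have : y - (y + t • h) = -(t • h) := by abel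
      rw [this, hnorm_neg_aux, hnorm_smul_aux _ _ _ ht.1]
    rw [div_le_iff₀ hpos]
    by_cases hc : t * a < 1
    · have := hSC _ (hseg t ht) y hy (by rw [hd]; exact hc) h
      rw [hd, le_div_iff₀ (by linarith)] at this
      change R * (1 - t * a) ≤ a at this
      nlinarith
    · nlinarith
  have hder : ∀ t ∈ Set.Icc (0 : ℝ) 1, HasDerivAt (fun t : ℝ => h ⬝ᵥ r (y + t • h) + R / (1 + t * R))
      (hnorm (D (y + t • h)) h ^ 2 - (R / (1 + t * R)) ^ 2) t := by
    intro t ht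
    have hpos : 0 < 1 + t * R := by have := mul_nonneg ht.1 hR0; linarith
    have h1 : HasFDerivAt r ((D (y + t • h)).mulVecLin.toContinuousLinearMap) (y + t • h) :=
      (hr _ (hseg t ht)).hasFDerivAt (hopen.mem_nhds (hseg t ht))
    have h2 : HasDerivAt (fun t : ℝ => y + t • h) h t := by
      simpa using ((hasDerivAt_id t).smul_const h).const_add y
    have h3 : HasDerivAt (fun t : ℝ => r (y + t • h)) ((D (y + t • h)).mulVec h) t := by
      have h30 := HasFDerivAt.comp_hasDerivAt (f := fun t : ℝ => y + t • h) t h1 h2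
      exact h30
    have h4 : HasDerivAt (fun t : ℝ => h ⬝ᵥ r (y + t • h)) (h ⬝ᵥ (D (y + t • h)).mulVec h) t := by
      unfold dotProduct
      apply HasDerivAt.fun_sum
      intro i _
      exact (hasDerivAt_pi.1 h3 i).const_mul _
    have h5 : HasDerivAt (fun t : ℝ => 1 + t * R) R t := by
      simpa using ((hasDerivAt_id t).mul_const R).const_add 1
    have h6 := h4.add ((hasDerivAt_const t R).div h5 hpos.ne')
    refine HasDerivAt.congr_deriv (f := fun t : ℝ => h ⬝ᵥ r (y + t • h) + R / (1 + t * R)) h6 ?_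
    rw [hnorm_sq_aux (hPD _ (hseg t ht))]
    field_simp
    ring
  have hmono : MonotoneOn (fun t : ℝ => h ⬝ᵥ r (y + t • h) + R / (1 + t * R)) (Set.Icc 0 1) := by
    apply monotoneOn_of_hasDerivWithinAt_nonneg (convex_Icc 0 1)
      (fun t ht => (hder t ht).continuousAt.continuousWithinAt)
      (fun t ht => (hder t (interior_subset ht)).hasDerivWithinAt)
    intro t ht
    have ht := interior_subset ht
    have hpos : 0 ≤ 1 + t * R := by have := mul_nonneg ht.1 hR0; linarith
    have := pow_le_pow_left₀ (div_nonneg hR0 hpos) (hlow t ht) 2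
    linarith
  have hm := hmono (Set.left_mem_Icc.2 zero_le_one) (Set.right_mem_Icc.2 zero_le_one) zero_le_one
  have he : y + h = ystar := by rw [hh]; abel
  simp only [zero_smul, add_zero, zero_mul, div_one, one_smul, one_mul, he, hroot,
    dotProduct_zero, zero_add] at hm
  have hcs := cauchy_aux (hPD y hy) h (-(D y)⁻¹.mulVec (r y))
  have hunit : IsUnit (D y).det := (hPD y hy).det_pos.ne'.isUnit
  have hDn : (D y).mulVec (-(D y)⁻¹.mulVec (r y)) = - r y := by
    rw [mulVec_neg, mulVec_mulVec, mul_nonsing_inv _ hunit, one_mulVec]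
  rw [hDn, dotProduct_neg] at hcs
  change -(h ⬝ᵥ r y) ≤ R * δ at hcs
  have hle : R * (1 - δ) ≤ δ := by
    rcases hR0.eq_or_lt with h0 | h0
    · rw [← h0]; linarith
    · have h7 : R * (1 - δ) ≤ R / (1 + R) := by linarith
      rw [le_div_iff₀ (by linarith)] at h7
      have h8 : (1 - δ) * (1 + R) ≤ 1 := by
        by_contra hcon
        push Not at hcon
        nlinarith
      linarith
  have hp : 0 < 1 - δ := by linarith
  have h9 : R ≤ δ + δ ^ 2 / (1 - δ) := by
    have : δ + δ ^ 2 / (1 - δ) = δ / (1 - δ) := by field_simp; ring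
    rw [this, le_div_iff₀ hp]
    exact hle
  have h10 : δ ^ 2 / (1 - δ) ≤ 3 * δ ^ 2 / (1 - δ) ^ 3 := by
    apply div_le_div₀ (by positivity) (by nlinarith [sq_nonneg δ]) (by positivity)
    exact pow_le_of_le_one hp.le (by linarith) (by norm_num)
  linarith
end
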